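/- arXiv:math/9803047 — 2 statements merged into one kernel-verified Lean document; each statement's English description precedes it below -/
import Mathlib

section
/- For every rational number v there exists N ∈ ℕ such that for every resolution datum (M, p) (of any size r) with -cᵀ M⁻¹ c = v, the numerical index of (M, p) — namely the least positive integer ρ such that every entry of ρ · (M⁻¹ c) ∈ ℚ^r is an integer — satisfies ρ ≤ N. -/
open Matrix

structure ResolutionDatum (r : ℕ) where
  M : Matrix (Fin r) (Fin r) ℤ
  p : Fin r → ℕ
  symm : M.IsSymm
  negdef : ∀ x : Fin r → ℝ, x ≠ 0 → x ⬝ᵥ ((M.map (Int.cast : ℤ → ℝ)) *ᵥ x) < 0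
  offdiag_nonneg : ∀ i j : Fin r, i ≠ j → 0 ≤ M i j
  diag_le_neg_two : ∀ i : Fin r, p i = 0 → M i i ≤ -2
  connected : (SimpleGraph.fromRel (fun i j : Fin r => 0 < M i j)).Connected

/-- The vector `c i = 2 p i - 2 - M i i` (the values `K · A_i`). -/
def ResolutionDatum.c {r : ℕ} (D : ResolutionDatum r) : Fin r → ℚ :=
  fun i => 2 * (D.p i : ℚ) - 2 - (D.M i i : ℚ)

/-- `-K² = -cᵀ M⁻¹ c`. -/
noncomputable def ResolutionDatum.negK2 {r : ℕ} (D : ResolutionDatum r) : ℚ :=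
  - (D.c ⬝ᵥ ((D.M.map (Int.cast : ℤ → ℚ))⁻¹ *ᵥ D.c))

/-- The set of all values `-K²` of normal surface singularities. -/
def negK2Set : Set ℝ :=
  { x : ℝ | ∃ (r : ℕ) (_ : 0 < r) (D : ResolutionDatum r), x = (D.negK2 : ℝ) }

/-!
The dual graph is regarded as an electrical network: its edges are unit resistors, the negative of
the intersection form is its energy form, a current `K · A_i` is injected at the vertex `i`, and
the coefficients of `-K` are the potential, of energy `-K²`. A bound for `-K²` bounds the sum of the
numbers `K · A_i`, and with it the first Betti number of the graph and the sum of the absolute row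
sums of the intersection matrix. Hence all but boundedly many vertices have row sum zero and
`K · A_i = 0`; these have valency two, and the potential is linear along the chains they form.
Contracting each such chain to one edge, whose length counts the unit edges, leaves a bounded number
of combinatorial types, and the coefficients of `K` are integral combinations of the values and the
slopes of the potential on the contracted network.

For one combinatorial type, lengthening the edges lowers the energy form, so the energy of the
potential can only stay the same if the potential and all of its slopes do. By Dickson's lemma
finitely many length vectors lie below all those that give the value `-K²`, so only finitely many
values and slopes occur, and these have a common denominator.
-/

theorem eq_of_bilinForm_apply_self_le {R X : Type*} [CommRing R] [LinearOrder R]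
    [IsStrictOrderedRing R] [AddCommGroup X] [Module R X] {Q : LinearMap.BilinForm R X}
    (hsymm : Q.IsSymm) (hpos : ∀ x ≠ 0, 0 < Q x x) {x y : X} (hx : Q x x ≤ Q y x)
    (hy : Q y y = Q y x) : y = x := by
  by_contra hne
  have hdiff := hpos (y - x) (sub_ne_zero.2 hne)
  have hxy : Q x y = Q y x := hsymm.eq x y
  simp only [map_sub, LinearMap.sub_apply, hxy] at hdiff
  linarith

section Edge

variable {ι κ : Type*}

/-- The energy form of an edge of a network. The pair `(z, l)` stands for a chain of `l` unit
edges joining the two ends of `z`, so that the edges of a dual graph are the pairs `(z, 1)`. -/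
def edgeForm (e : Sym2 ι × ℕ+) : LinearMap.BilinForm ℚ (ι → ℚ) :=
  (e.2 : ℚ)⁻¹ • e.1.lift ⟨fun i j => .linMulLin (.proj i - .proj j) (.proj i - .proj j),
    fun i j => by ext; simp; ring⟩

/-- The absolute value of the slope of a function along an edge, that is, of its step along the
corresponding chain of unit edges when it is interpolated linearly. The sign would depend on an
orientation. -/
def edgeSlope (x : ι → ℚ) (e : Sym2 ι × ℕ+) : ℚ :=
  e.1.lift ⟨fun i j => |x i - x j|, fun i j => abs_sub_comm (x i) (x j)⟩ / e.2

@[simp]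
theorem edgeForm_mk (i j : ι) (l : ℕ+) (x y : ι → ℚ) :
    edgeForm (s(i, j), l) x y = (x i - x j) * (y i - y j) / l := by
  simp only [edgeForm, Sym2.lift_mk, LinearMap.smul_apply, LinearMap.BilinForm.linMulLin_apply,
    LinearMap.sub_apply, LinearMap.proj_apply, smul_eq_mul]
  ring

theorem edgeSlope_mk (i j : ι) (l : ℕ+) (x : ι → ℚ) :
    edgeSlope x (s(i, j), l) = |(x i - x j) / l| := by
  rw [abs_div, Nat.abs_cast]
  rfl

theorem edgeForm_comm (e : Sym2 ι × ℕ+) (x y : ι → ℚ) : edgeForm e x y = edgeForm e y x := by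
  obtain ⟨⟨i, j⟩, l⟩ := e
  simp only [edgeForm_mk, mul_comm]

theorem edgeForm_map (σ : κ → ι) (e : Sym2 κ × ℕ+) (x y : ι → ℚ) :
    edgeForm (e.1.map σ, e.2) x y = edgeForm e (x ∘ σ) (y ∘ σ) := by
  obtain ⟨⟨i, j⟩, l⟩ := e
  simp only [Sym2.map_mk, edgeForm_mk, Function.comp_apply]

theorem edgeSlope_map (σ : κ → ι) (e : Sym2 κ × ℕ+) (x : ι → ℚ) :
    edgeSlope x (e.1.map σ, e.2) = edgeSlope (x ∘ σ) e := by
  obtain ⟨⟨i, j⟩, l⟩ := e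
  simp only [Sym2.map_mk, edgeSlope_mk, Function.comp_apply]

theorem edgeForm_congr {e : Sym2 ι × ℕ+} {x x' y y' : ι → ℚ} (hx : ∀ i ∈ e.1, x i = x' i)
    (hy : ∀ i ∈ e.1, y i = y' i) : edgeForm e x y = edgeForm e x' y' := by
  obtain ⟨⟨i, j⟩, l⟩ := e
  simp only [edgeForm_mk, hx i (Sym2.mem_mk_left i j), hx j (Sym2.mem_mk_right i j),
    hy i (Sym2.mem_mk_left i j), hy j (Sym2.mem_mk_right i j)]

theorem edgeForm_single_of_notMem [DecidableEq ι] {e : Sym2 ι × ℕ+} {i : ι} (hi : i ∉ e.1)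
    (x : ι → ℚ) : edgeForm e x (Pi.single i 1) = 0 := by
  rw [edgeForm_congr (y' := 0) (fun _ _ => rfl)
    fun j hj => Pi.single_eq_of_ne (ne_of_mem_of_not_mem hj hi) 1, map_zero]

theorem edgeForm_self_antitone (z : Sym2 ι) (x : ι → ℚ) :
    Antitone fun l : ℕ+ => edgeForm (z, l) x x := fun l l' hl => by
  obtain ⟨i, j⟩ := z
  have hl' : (l : ℚ) ≤ l' := by exact_mod_cast hl
  simp only [edgeForm_mk]
  gcongr
  exact mul_self_nonneg _

theorem edgeSlope_eq_of_edgeForm_self_eq {z : Sym2 ι} {l l' : ℕ+} {x : ι → ℚ}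
    (h : edgeForm (z, l) x x = edgeForm (z, l') x x) :
    edgeSlope x (z, l) = edgeSlope x (z, l') := by
  obtain ⟨i, j⟩ := z
  simp only [edgeForm_mk, mul_div_assoc] at h
  rw [edgeSlope_mk, edgeSlope_mk]
  rcases mul_eq_mul_left_iff.1 h with h | h
  · rw [h]
  · simp only [h, zero_div]

end Edge

section Network

variable {ι : Type*}

/-- A finite electrical network: an edge `(z, l)` is a chain of `l` unit resistors joining the two
ends of `z`. The weight of a vertex is the negative of its conductance to the ground, which may be
negative itself; the load is the injected current. -/
structure Network (ι : Type*) where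
  verts : Finset ι
  edges : Multiset (Sym2 ι × ℕ+)
  weight : ι → ℤ
  load : ι → ℤ
  mem_verts : ∀ e ∈ edges, ∀ i ∈ e.1, i ∈ verts

namespace Network

variable (N : Network ι) {n x x' y y' : ι → ℚ} {i : ι}

/-- The energy form. For the network of a resolution datum it is the negative of the intersection
form, the weight of a vertex being the corresponding row sum. -/
def energy : LinearMap.BilinForm ℚ (ι → ℚ) :=
  (N.edges.map edgeForm).sum -
    ∑ i ∈ N.verts, (N.weight i : ℚ) • .linMulLin (.proj i) (.proj i)

/-- Positive definiteness of the energy form on functions on the vertices. -/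
def PosDef : Prop := ∀ x : ι → ℚ, (∃ i ∈ N.verts, x i ≠ 0) → 0 < N.energy x x

/-- The function `n` solves the Poisson equation of the network, in its weak form. -/
def IsPotential (n : ι → ℚ) : Prop := ∀ x, N.energy n x = ∑ i ∈ N.verts, (N.load i : ℚ) * x i

/-- The network is positive definite and `n` is its potential, of energy `v`. For the network of a
resolution datum the potential is the coefficient vector of `-K`, and `v` is `-K²`. -/
structure IsEquilibrium (n : ι → ℚ) (v : ℚ) : Prop where
  posDef : N.PosDef
  isPotential : N.IsPotential n
  energy_self : N.energy n n = v

/-- The values and slopes of a function on a network. -/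
def coeffs (n : ι → ℚ) : Set ℚ := n '' N.verts ∪ edgeSlope n '' {e | e ∈ N.edges}

theorem energy_apply (x y : ι → ℚ) :
    N.energy x y = (N.edges.map fun e => edgeForm e x y).sum -
      ∑ i ∈ N.verts, (N.weight i : ℚ) * (x i * y i) := by
  have hsum (E : Multiset (Sym2 ι × ℕ+)) :
      (E.map edgeForm).sum x y = (E.map fun e => edgeForm e x y).sum := by
    induction E using Multiset.induction with
    | empty => simp
    | cons e E ih => simp [ih]
  simp [energy, hsum]

theorem energy_isSymm : N.energy.IsSymm where
  eq x y := by simp only [energy_apply, edgeForm_comm _ x y, mul_comm (x _)]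

theorem energy_congr (hx : ∀ i ∈ N.verts, x i = x' i) (hy : ∀ i ∈ N.verts, y i = y' i) :
    N.energy x y = N.energy x' y' := by
  rw [energy_apply, energy_apply,
    Multiset.map_congr rfl fun e he => edgeForm_congr (fun i hi => hx i (N.mem_verts e he i hi))
      fun i hi => hy i (N.mem_verts e he i hi),
    Finset.sum_congr rfl fun i hi => by rw [hx i hi, hy i hi]]

theorem finite_coeffs (n : ι → ℚ) : (N.coeffs n).Finite :=
  (N.verts.finite_toSet.image n).union (N.edges.finite_toSet.image (edgeSlope n))

/-- The number of ends of edges at a vertex; a loop counts twice. -/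
def valency [DecidableEq ι] (E : Multiset (Sym2 ι × ℕ+)) (i : ι) : ℕ :=
  (E.bind fun e => e.1.toMultiset).count i

/-- The vertex `i` has valency two with neighbours `left` and `right`, so that it subdivides a
longer edge. -/
structure Subdivision (N : Network ι) (i : ι) where
  left : ι
  right : ι
  leftLength : ℕ+
  rightLength : ℕ+
  rest : Multiset (Sym2 ι × ℕ+)
  edges_eq : N.edges = (s(left, i), leftLength) ::ₘ (s(i, right), rightLength) ::ₘ rest
  left_ne : left ≠ i
  right_ne : right ≠ i
  notMem_rest : ∀ e ∈ rest, i ∉ e.1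

namespace Subdivision

variable {N} (S : N.Subdivision i)

/-- The function `x` has no kink at `i`. -/
def HarmonicAt (x : ι → ℚ) : Prop :=
  (x S.left - x i) / S.leftLength = (x i - x S.right) / S.rightLength

variable {S}

theorem HarmonicAt.slope_eq (hx : S.HarmonicAt x) :
    (x S.left - x S.right) / (S.leftLength + S.rightLength : ℕ+) =
      (x S.left - x i) / S.leftLength := by
  have hl : (S.leftLength : ℚ) ≠ 0 := by simp
  have hr : (S.rightLength : ℚ) ≠ 0 := by simp
  have hlr : (S.leftLength : ℚ) + S.rightLength ≠ 0 := by positivity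
  rw [HarmonicAt, div_eq_div_iff hl hr] at hx
  rw [PNat.add_coe, Nat.cast_add, div_eq_div_iff hlr hl]
  linear_combination -hx

variable (S)

theorem energy_single [DecidableEq ι] (x : ι → ℚ) (hi : N.weight i = 0) :
    N.energy x (Pi.single i 1) =
      (x i - x S.right) / S.rightLength - (x S.left - x i) / S.leftLength := by
  have hrest : (S.rest.map fun e => edgeForm e x (Pi.single i 1)).sum = 0 :=
    Multiset.sum_eq_zero fun q hq => by
      obtain ⟨e, he, rfl⟩ := Multiset.mem_map.1 hq
      exact edgeForm_single_of_notMem (S.notMem_rest e he) x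
  have hverts : ∑ j ∈ N.verts, (N.weight j : ℚ) * (x j * (Pi.single i 1 : ι → ℚ) j) = 0 := by
    simp [Pi.single_apply, hi]
  rw [energy_apply, hverts, S.edges_eq]
  simp only [Multiset.map_cons, Multiset.sum_cons, hrest, edgeForm_mk, Pi.single_eq_same,
    Pi.single_eq_of_ne S.left_ne, Pi.single_eq_of_ne S.right_ne]
  ring

variable {S}

theorem harmonicAt_of_isPotential (hn : N.IsPotential n) (hw : N.weight i = 0)
    (hl : N.load i = 0) : S.HarmonicAt n := by
  classical
  have hload : ∑ j ∈ N.verts, (N.load j : ℚ) * (Pi.single i 1 : ι → ℚ) j = 0 := by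
    simp [Pi.single_apply, hl]
  have hsingle := hn (Pi.single i 1)
  rw [S.energy_single n hw, hload, sub_eq_zero] at hsingle
  exact hsingle.symm

variable [DecidableEq ι] (S)

/-- The network in which the vertex `i` is removed and the two edges at it are merged. -/
def smooth : Network ι where
  verts := N.verts.erase i
  edges := (s(S.left, S.right), S.leftLength + S.rightLength) ::ₘ S.rest
  weight := N.weight
  load := N.load
  mem_verts e he j hj := by
    have hmem := N.mem_verts
    simp only [S.edges_eq, Multiset.mem_cons, forall_eq_or_imp] at hmem
    refine Finset.mem_erase.2 ?_
    rcases Multiset.mem_cons.1 he with rfl | he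
    · rcases Sym2.mem_iff.1 hj with rfl | rfl
      · exact ⟨S.left_ne, hmem.1 _ (Sym2.mem_mk_left _ _)⟩
      · exact ⟨S.right_ne, hmem.2.1 _ (Sym2.mem_mk_right _ _)⟩
    · exact ⟨ne_of_mem_of_not_mem hj (S.notMem_rest e he), hmem.2.2 e he j hj⟩

variable {S}

theorem HarmonicAt.energy_smooth (hx : S.HarmonicAt x) (hi : N.weight i = 0) (y : ι → ℚ) :
    S.smooth.energy x y = N.energy x y := by
  have hmerge : edgeForm (s(S.left, S.right), S.leftLength + S.rightLength) x y =
      edgeForm (s(S.left, i), S.leftLength) x y + edgeForm (s(i, S.right), S.rightLength) x y := by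
    have hslope := hx.slope_eq
    rw [HarmonicAt] at hx
    simp only [edgeForm_mk, mul_div_right_comm _ (y _ - y _), hslope, ← hx]
    ring
  have hverts : ∑ j ∈ N.verts.erase i, (N.weight j : ℚ) * (x j * y j) =
      ∑ j ∈ N.verts, (N.weight j : ℚ) * (x j * y j) :=
    Finset.sum_erase _ (by simp [hi])
  rw [energy_apply, energy_apply, S.edges_eq]
  simp only [smooth, Multiset.map_cons, Multiset.sum_cons, hmerge, hverts, add_assoc]

variable (S)

theorem exists_harmonicAt_update (x : ι → ℚ) : ∃ t, S.HarmonicAt (Function.update x i t) := by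
  have hl : (S.leftLength : ℚ) ≠ 0 := by simp
  have hr : (S.rightLength : ℚ) ≠ 0 := by simp
  have hlr : (S.leftLength : ℚ) + S.rightLength ≠ 0 := by positivity
  refine ⟨(S.rightLength * x S.left + S.leftLength * x S.right) /
    (S.leftLength + S.rightLength), ?_⟩
  simp only [HarmonicAt, Function.update_self, Function.update_of_ne S.left_ne,
    Function.update_of_ne S.right_ne]
  field_simp
  ring

theorem posDef_smooth (hN : N.PosDef) (hi : N.weight i = 0) : S.smooth.PosDef := by
  rintro x ⟨j, hj, hxj⟩
  obtain ⟨t, ht⟩ := S.exists_harmonicAt_update x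
  have hupdate : ∀ k ∈ N.verts.erase i, Function.update x i t k = x k := fun k hk =>
    Function.update_of_ne (Finset.ne_of_mem_erase hk) t x
  calc 0 < N.energy (Function.update x i t) (Function.update x i t) :=
        hN _ ⟨j, Finset.mem_of_mem_erase hj, by rwa [hupdate j hj]⟩
    _ = S.smooth.energy (Function.update x i t) (Function.update x i t) :=
        (ht.energy_smooth hi _).symm
    _ = S.smooth.energy x x := S.smooth.energy_congr hupdate hupdate

theorem isPotential_smooth (hn : N.IsPotential n) (hw : N.weight i = 0) (hl : N.load i = 0) :
    S.smooth.IsPotential n := fun x => by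
  rw [(harmonicAt_of_isPotential hn hw hl).energy_smooth hw, hn x]
  exact (Finset.sum_erase _ (by simp [hl])).symm

theorem valency_smooth {j : ι} (hj : j ≠ i) :
    valency S.smooth.edges j = valency N.edges j := by
  have hpair (a b : ι) : s(a, b).toMultiset = {a, b} := rfl
  rw [S.edges_eq]
  simp only [valency, smooth, Multiset.cons_bind, hpair, Multiset.count_add,
    Multiset.insert_eq_cons, Multiset.count_cons, Multiset.count_singleton, hj, if_false]
  ring

theorem card_edges_smooth : S.smooth.edges.card + 1 = N.edges.card := by
  simp only [S.edges_eq, smooth, Multiset.card_cons]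

/-- Along the merged edge `n` is linear, hence its value at `i` is an integral combination of its
value at `left` and of the common slope. -/
theorem HarmonicAt.coeffs_subset (hn : S.HarmonicAt n) :
    N.coeffs n ⊆ AddSubgroup.closure (S.smooth.coeffs n) := by
  set Λ := AddSubgroup.closure (S.smooth.coeffs n)
  have hval : ∀ j ∈ S.smooth.verts, n j ∈ Λ := fun j hj =>
    AddSubgroup.subset_closure (Or.inl (Set.mem_image_of_mem n hj))
  have hslope : ∀ e ∈ S.smooth.edges, edgeSlope n e ∈ Λ := fun e he =>
    AddSubgroup.subset_closure (Or.inr (Set.mem_image_of_mem _ he))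
  have hmerged := hslope _ (Multiset.mem_cons_self _ _)
  rw [edgeSlope_mk, hn.slope_eq, abs_mem_iff] at hmerged
  rintro q (⟨j, hj, rfl⟩ | ⟨e, he, rfl⟩)
  · rcases eq_or_ne j i with rfl | hji
    · have hleft := hval S.left
        (S.smooth.mem_verts _ (Multiset.mem_cons_self _ _) _ (Sym2.mem_mk_left _ _))
      have hstep : n S.left - n j = (S.leftLength : ℕ) • ((n S.left - n j) / S.leftLength) := by
        rw [nsmul_eq_mul, mul_div_cancel₀ _ (by simp)]
      rw [SetLike.mem_coe, ← sub_sub_cancel (n S.left) (n j), hstep]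
      exact Λ.sub_mem hleft (Λ.nsmul_mem hmerged _)
    · exact hval j (Finset.mem_erase.2 ⟨hji, hj⟩)
  · rw [Set.mem_ofPred_eq, S.edges_eq, Multiset.mem_cons, Multiset.mem_cons] at he
    rcases he with rfl | rfl | he
    · rwa [edgeSlope_mk, SetLike.mem_coe, abs_mem_iff]
    · rwa [edgeSlope_mk, SetLike.mem_coe, abs_mem_iff, ← show _ = _ from hn]
    · exact hslope e (Multiset.mem_cons_of_mem he)

end Subdivision

section Valency

variable [DecidableEq ι]

theorem valency_cons (i a b : ι) (l : ℕ+) (E : Multiset (Sym2 ι × ℕ+)) :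
    valency ((s(a, b), l) ::ₘ E) i = ({a, b} : Multiset ι).count i + valency E i := by
  rw [valency, Multiset.cons_bind, Multiset.count_add]
  rfl

theorem valency_eq_zero_iff {E : Multiset (Sym2 ι × ℕ+)} :
    valency E i = 0 ↔ ∀ e ∈ E, i ∉ e.1 := by
  simp [valency, Multiset.count_eq_zero]

theorem exists_cons_of_valency_ne_zero {E : Multiset (Sym2 ι × ℕ+)} (h : valency E i ≠ 0) :
    ∃ j l F, E = (s(i, j), l) ::ₘ F := by
  obtain ⟨⟨z, l⟩, he, hi⟩ : ∃ e ∈ E, i ∈ e.1 := by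
    by_contra! hE
    exact h (valency_eq_zero_iff.2 hE)
  obtain ⟨j, rfl⟩ := Sym2.mem_iff_exists.1 hi
  obtain ⟨F, rfl⟩ := Multiset.exists_cons_of_mem he
  exact ⟨j, l, F, rfl⟩

variable {N}

/-- A loop at `i` would exhaust the valency, and the indicator function of `i` would have energy
zero. -/
theorem PosDef.nonempty_subdivision (hN : N.PosDef) (hi : i ∈ N.verts) (hw : N.weight i = 0)
    (hval : valency N.edges i = 2) : Nonempty (N.Subdivision i) := by
  obtain ⟨j, l, F, hE⟩ := exists_cons_of_valency_ne_zero (E := N.edges) (i := i) (by omega)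
  rw [hE, valency_cons] at hval
  have hji : j ≠ i := by
    rintro rfl
    have hF : valency F j = 0 := by simpa using hval
    have hsum : (F.map fun e => edgeForm e (Pi.single j 1) (Pi.single j 1)).sum = 0 :=
      Multiset.sum_eq_zero fun q hq => by
        obtain ⟨e, he, rfl⟩ := Multiset.mem_map.1 hq
        exact edgeForm_single_of_notMem (valency_eq_zero_iff.1 hF e he) _
    refine (hN (Pi.single j 1) ⟨j, hi, by simp⟩).ne' ?_
    rw [energy_apply, hE, Multiset.map_cons, Multiset.sum_cons, hsum]
    simp [Pi.single_apply, hw]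
  have hF : valency F i = 1 := by
    simp [hji.symm] at hval
    omega
  obtain ⟨k, l', G, rfl⟩ := exists_cons_of_valency_ne_zero (E := F) (i := i) (by omega)
  rw [valency_cons] at hF
  have hki : k ≠ i := by
    rintro rfl
    simp at hF
    omega
  have hG : valency G i = 0 := by simpa [Multiset.count_singleton, hki.symm] using hF
  exact ⟨⟨j, k, l, l', G, by rw [hE, Sym2.eq_swap], hji, hki, valency_eq_zero_iff.1 hG⟩⟩

theorem IsEquilibrium.smooth {v : ℚ} (h : N.IsEquilibrium n v) (hw : N.weight i = 0)
    (hl : N.load i = 0) (S : N.Subdivision i) : S.smooth.IsEquilibrium n v where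
  posDef := S.posDef_smooth h.posDef hw
  isPotential := S.isPotential_smooth h.isPotential hw hl
  energy_self :=
    ((S.harmonicAt_of_isPotential h.isPotential hw hl).energy_smooth hw n).trans h.energy_self

end Valency

section OfLengths

variable {κ ε : Type*} [Fintype κ] [Fintype ε] {a c : κ → ℤ} {s : ε → Sym2 κ} {l l' : ε → ℕ+}
  {v : ℚ}

/-- The networks of a fixed combinatorial type, parametrized by the lengths of their edges. -/
def ofLengths (a c : κ → ℤ) (s : ε → Sym2 κ) (l : ε → ℕ+) : Network κ where
  verts := Finset.univ
  edges := Finset.univ.val.map fun e => (s e, l e)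
  weight := a
  load := c
  mem_verts _ _ i _ := Finset.mem_univ i

theorem energy_ofLengths (x y : κ → ℚ) : (ofLengths a c s l).energy x y =
    ∑ e, edgeForm (s e, l e) x y - ∑ i, (a i : ℚ) * (x i * y i) := by
  rw [energy_apply, ofLengths, Multiset.map_map]
  rfl

theorem coeffs_ofLengths (n : κ → ℚ) : (ofLengths a c s l).coeffs n =
    Set.range n ∪ Set.range fun e => edgeSlope n (s e, l e) := by
  ext q
  simp [coeffs, ofLengths]

theorem energy_ofLengths_self_antitone (x : κ → ℚ) :
    Antitone fun l : ε → ℕ+ => (ofLengths a c s l).energy x x := fun l l' hl => by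
  simp only [energy_ofLengths]
  gcongr with e
  exact edgeForm_self_antitone (s e) x (hl e)

theorem edgeSlope_eq_of_energy_ofLengths_self_eq (hl : l ≤ l') {x : κ → ℚ}
    (h : (ofLengths a c s l).energy x x = (ofLengths a c s l').energy x x) (e : ε) :
    edgeSlope x (s e, l e) = edgeSlope x (s e, l' e) := by
  rw [energy_ofLengths, energy_ofLengths, sub_left_inj, eq_comm,
    Finset.sum_eq_sum_iff_of_le fun e _ => edgeForm_self_antitone (s e) x (hl e)] at h
  exact (edgeSlope_eq_of_edgeForm_self_eq (h e (Finset.mem_univ e))).symm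

/-- Lengthening the edges lowers the energy form, hence raises the energy of the potential unless
nothing changes. -/
theorem IsEquilibrium.eq_of_le {n n' : κ → ℚ} (h : (ofLengths a c s l).IsEquilibrium n v)
    (h' : (ofLengths a c s l').IsEquilibrium n' v) (hl : l ≤ l') : n' = n := by
  have hload : (ofLengths a c s l').energy n' n = (ofLengths a c s l).energy n n := by
    rw [h'.isPotential, h.isPotential]
    rfl
  refine eq_of_bilinForm_apply_self_le (energy_isSymm _) (fun x hx => ?_)
    ((energy_ofLengths_self_antitone n hl).trans_eq hload.symm)
    (by rw [hload, h.energy_self, h'.energy_self])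
  obtain ⟨i, hi⟩ := Function.ne_iff.1 hx
  exact h'.posDef x ⟨i, Finset.mem_univ i, hi⟩

theorem IsEquilibrium.coeffs_eq_of_le {n n' : κ → ℚ} (h : (ofLengths a c s l).IsEquilibrium n v)
    (h' : (ofLengths a c s l').IsEquilibrium n' v) (hl : l ≤ l') :
    (ofLengths a c s l').coeffs n' = (ofLengths a c s l).coeffs n := by
  obtain rfl := h.eq_of_le h' hl
  rw [coeffs_ofLengths, coeffs_ofLengths]
  congr 2
  ext e
  exact (edgeSlope_eq_of_energy_ofLengths_self_eq hl (h.energy_self.trans h'.energy_self.symm)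
    e).symm

/-- By Dickson's lemma the admissible length vectors have only finitely many minimal elements. -/
theorem finite_coeffs_ofLengths (a c : κ → ℤ) (s : ε → Sym2 κ) (v : ℚ) :
    {q | ∃ l n, (ofLengths a c s l).IsEquilibrium n v ∧
      q ∈ (ofLengths a c s l).coeffs n}.Finite := by
  set P : (ε → ℕ+) → Prop := fun l => ∃ n, (ofLengths a c s l).IsEquilibrium n v
  have hfin : {l | Minimal P l}.Finite :=
    WellQuasiOrderedLE.finite_of_isAntichain (setOfPred_minimal_antichain P)
  choose! pot hpot using fun l (hl : P l) => hl
  refine (hfin.biUnion fun l _ => (ofLengths a c s l).finite_coeffs (pot l)).subset ?_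
  rintro q ⟨l, n, hn, hq⟩
  obtain ⟨l₀, hl₀, hmin⟩ := exists_minimal_le_of_wellFoundedLT P l ⟨n, hn⟩
  rw [(hpot l₀ hmin.prop).coeffs_eq_of_le hn hl₀] at hq
  exact Set.mem_biUnion hmin hq

end OfLengths

section Labelling

variable {N} {κ ε : Type*} [Fintype κ] [Fintype ε] {σ : κ ↪ ι} {s : ε → Sym2 κ} {l : ε → ℕ+}
  {v : ℚ}

theorem energy_ofLengths_comp (hV : Finset.univ.map σ = N.verts)
    (hE : Finset.univ.val.map (fun e => ((s e).map σ, l e)) = N.edges) (x y : ι → ℚ) :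
    (ofLengths (N.weight ∘ σ) (N.load ∘ σ) s l).energy (x ∘ σ) (y ∘ σ) = N.energy x y := by
  rw [energy_ofLengths, energy_apply, ← hV, ← hE, Multiset.map_map, Finset.sum_map]
  simp only [← edgeForm_map, Function.comp_apply]
  rfl

theorem coeffs_ofLengths_comp (hV : Finset.univ.map σ = N.verts)
    (hE : Finset.univ.val.map (fun e => ((s e).map σ, l e)) = N.edges) (n : ι → ℚ) :
    (ofLengths (N.weight ∘ σ) (N.load ∘ σ) s l).coeffs (n ∘ σ) = N.coeffs n := by
  ext q
  rw [coeffs_ofLengths]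
  simp [coeffs, ← hV, ← hE, ← edgeSlope_map]

theorem IsEquilibrium.ofLengths_comp (h : N.IsEquilibrium n v)
    (hV : Finset.univ.map σ = N.verts)
    (hE : Finset.univ.val.map (fun e => ((s e).map σ, l e)) = N.edges) :
    (ofLengths (N.weight ∘ σ) (N.load ∘ σ) s l).IsEquilibrium (n ∘ σ) v := by
  have hext (x : κ → ℚ) : Function.extend σ x 0 ∘ σ = x := Function.extend_comp σ.injective x 0
  refine ⟨?_, fun x => ?_, by rw [energy_ofLengths_comp hV hE, h.energy_self]⟩
  · rintro x ⟨i, -, hi⟩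
    rw [← hext x, energy_ofLengths_comp hV hE]
    refine h.posDef _ ⟨σ i, hV ▸ Finset.mem_map_of_mem σ (Finset.mem_univ i), ?_⟩
    rwa [σ.injective.extend_apply]
  · rw [← hext x, energy_ofLengths_comp hV hE, h.isPotential, ← hV, Finset.sum_map]
    rfl

theorem exists_labelling (N : Network ι) :
    ∃ (σ : Fin N.verts.card ↪ ι) (s : Fin N.edges.card → Sym2 (Fin N.verts.card))
      (l : Fin N.edges.card → ℕ+), Finset.univ.map σ = N.verts ∧
        Finset.univ.val.map (fun e => ((s e).map σ, l e)) = N.edges := by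
  obtain ⟨f, hf⟩ : ∃ f : Fin N.edges.card → Sym2 ι × ℕ+, Finset.univ.val.map f = N.edges := by
    obtain ⟨E, hE⟩ := Quot.exists_rep N.edges
    rw [← hE]
    exact ⟨E.get, (Fin.univ_val_map E.get).trans (congrArg _ (List.ofFn_get E))⟩
  set σ : Fin N.verts.card ↪ ι :=
    N.verts.equivFin.symm.toEmbedding.trans (Function.Embedding.subtype _) with hσ
  have hV : Finset.univ.map σ = N.verts := by
    rw [hσ, ← Finset.map_map, Finset.map_univ_equiv]
    exact Finset.attach_map_val
  have hlift (e : Fin N.edges.card) : ∃ z, Sym2.map σ z = (f e).1 := by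
    have hmem : ∀ i ∈ (f e).1, ∃ k, σ k = i := fun i hi => by
      have := N.mem_verts (f e) (hf ▸ Multiset.mem_map_of_mem f (Finset.mem_univ_val e)) i hi
      rw [← hV] at this
      simpa using this
    induction h : (f e).1 with | h i j =>
    rw [h] at hmem
    obtain ⟨k, rfl⟩ := hmem i (Sym2.mem_mk_left _ _)
    obtain ⟨m, rfl⟩ := hmem j (Sym2.mem_mk_right _ _)
    exact ⟨s(k, m), Sym2.map_mk ..⟩
  choose s hs using hlift
  exact ⟨σ, s, fun e => (f e).2, hV, by simp only [hs, Prod.mk.eta, hf]⟩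

end Labelling

theorem exists_finite_coeffs_subset_of_le (B : ℕ) (v : ℚ) : ∃ S : Set ℚ, S.Finite ∧
    ∀ {ι : Type*} (N : Network ι) (n : ι → ℚ), N.IsEquilibrium n v → N.verts.card ≤ B →
      N.edges.card ≤ B → (∀ i ∈ N.verts, |N.weight i| ≤ B ∧ |N.load i| ≤ B) →
        N.coeffs n ⊆ S := by
  refine ⟨⋃ (k : Fin (B + 1)) (m : Fin (B + 1)) (a : Fin k → Set.Icc (-B : ℤ) B)
    (c : Fin k → Set.Icc (-B : ℤ) B) (s : Fin m → Sym2 (Fin k)),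
    {q | ∃ l n, (ofLengths (fun i => a i) (fun i => c i) s l).IsEquilibrium n v ∧
      q ∈ (ofLengths (fun i => a i) (fun i => c i) s l).coeffs n}, ?_, ?_⟩
  · exact Set.finite_iUnion fun k => Set.finite_iUnion fun m => Set.finite_iUnion fun a =>
      Set.finite_iUnion fun c => Set.finite_iUnion fun s => finite_coeffs_ofLengths _ _ s v
  intro ι N n hn hV hE hB q hq
  obtain ⟨σ, s, l, hσ, hs⟩ := N.exists_labelling
  have hmem (i) : σ i ∈ N.verts := by
    simpa only [hσ] using Finset.mem_map_of_mem σ (Finset.mem_univ i)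
  simp only [Set.mem_iUnion]
  exact ⟨⟨_, Nat.lt_succ_of_le hV⟩, ⟨_, Nat.lt_succ_of_le hE⟩,
    fun i => ⟨N.weight (σ i), abs_le.1 (hB _ (hmem i)).1⟩,
    fun i => ⟨N.load (σ i), abs_le.1 (hB _ (hmem i)).2⟩, s, l, n ∘ σ,
    hn.ofLengths_comp hσ hs, by rwa [← coeffs_ofLengths_comp hσ hs] at hq⟩

/-- The total amount of weight and load. -/
def size (N : Network ι) : ℤ := ∑ i ∈ N.verts, (|N.weight i| + |N.load i|)

theorem abs_weight_add_abs_load_le_size (N : Network ι) (hi : i ∈ N.verts) :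
    |N.weight i| + |N.load i| ≤ N.size :=
  Finset.single_le_sum (f := fun j => |N.weight j| + |N.load j|)
    (fun _ _ => add_nonneg (abs_nonneg _) (abs_nonneg _)) hi

theorem card_verts_le_size (N : Network ι)
    (h : ∀ i ∈ N.verts, N.weight i = 0 → N.load i ≠ 0) : (N.verts.card : ℤ) ≤ N.size := by
  have hone : ∀ i ∈ N.verts, 1 ≤ |N.weight i| + |N.load i| := fun i hi => by
    have := h i hi
    grind
  simpa [size] using Finset.card_nsmul_le_sum _ _ _ hone

theorem Subdivision.size_smooth [DecidableEq ι] {N : Network ι} (S : N.Subdivision i)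
    (hw : N.weight i = 0) (hl : N.load i = 0) : S.smooth.size = N.size :=
  Finset.sum_erase _ (by simp [smooth, hw, hl])

theorem IsEquilibrium.exists_reduction [DecidableEq ι] {N : Network ι} {v : ℚ}
    (h : N.IsEquilibrium n v)
    (hval : ∀ i ∈ N.verts, N.weight i = 0 → N.load i = 0 → valency N.edges i = 2) :
    ∃ N' : Network ι, N'.IsEquilibrium n v ∧ (∀ i ∈ N'.verts, N'.weight i = 0 → N'.load i ≠ 0) ∧
      N'.size = N.size ∧ N'.edges.card + N.verts.card = N.edges.card + N'.verts.card ∧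
      N.coeffs n ⊆ AddSubgroup.closure (N'.coeffs n) := by
  induction hk : N.verts.card using Nat.strong_induction_on generalizing N with | h k ih =>
  by_cases hflat : ∀ i ∈ N.verts, N.weight i = 0 → N.load i ≠ 0
  · exact ⟨N, h, hflat, rfl, by rw [hk], AddSubgroup.subset_closure⟩
  push Not at hflat
  obtain ⟨i, hi, hw, hl⟩ := hflat
  obtain ⟨S⟩ := h.posDef.nonempty_subdivision hi hw (hval i hi hw hl)
  have hverts : S.smooth.verts.card + 1 = k := hk ▸ Finset.card_erase_add_one hi
  have hedges := S.card_edges_smooth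
  obtain ⟨N', hN', hflat', hsize, hcard, hsub⟩ := ih _ (by omega) (h.smooth hw hl S)
    (fun j hj hwj hlj => by
      obtain ⟨hji, hj⟩ := Finset.mem_erase.1 hj
      rw [S.valency_smooth hji, hval j hj hwj hlj]) rfl
  refine ⟨N', hN', hflat', hsize.trans (S.size_smooth hw hl), by omega, ?_⟩
  exact (S.harmonicAt_of_isPotential h.isPotential hw hl).coeffs_subset.trans
    ((AddSubgroup.closure_le _).2 hsub)

theorem exists_finite_coeffs_subset_closure (B : ℕ) (v : ℚ) : ∃ S : Set ℚ, S.Finite ∧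
    ∀ {ι : Type*} [DecidableEq ι] (N : Network ι) (n : ι → ℚ), N.IsEquilibrium n v →
      (∀ i ∈ N.verts, N.weight i = 0 → N.load i = 0 → valency N.edges i = 2) → N.size ≤ B →
        N.edges.card ≤ N.verts.card + B → N.coeffs n ⊆ AddSubgroup.closure S := by
  obtain ⟨S, hS, hcoeffs⟩ := exists_finite_coeffs_subset_of_le (2 * B) v
  refine ⟨S, hS, fun N n hn hval hB hE => ?_⟩
  obtain ⟨N', hN', hflat, hsize, hcard, hsub⟩ := hn.exists_reduction hval
  have hV' := N'.card_verts_le_size hflat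
  refine hsub.trans ((AddSubgroup.closure_le _).2 ((hcoeffs N' n hN' (by omega) (by omega)
    fun i hi => ?_).trans AddSubgroup.subset_closure))
  have hle := N'.abs_weight_add_abs_load_le_size hi
  have hw := abs_nonneg (N'.weight i)
  have hl := abs_nonneg (N'.load i)
  push_cast
  constructor <;> linarith

end Network

end Network

theorem exists_common_denominator {S : Set ℚ} (hS : S.Finite) :
    ∃ d : ℕ, 0 < d ∧ ∀ q ∈ AddSubgroup.closure S, ∃ z : ℤ, d * q = z := by
  refine ⟨∏ q ∈ hS.toFinset, q.den, Finset.prod_pos fun q _ => q.den_pos, fun q hq => ?_⟩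
  induction hq using AddSubgroup.closure_induction with
  | mem q hq =>
    obtain ⟨k, hk⟩ := Finset.dvd_prod_of_mem Rat.den (hS.mem_toFinset.2 hq)
    refine ⟨k * q.num, ?_⟩
    rw [hk]
    push_cast
    rw [mul_comm (q.den : ℚ), mul_assoc, Rat.den_mul_eq_num]
  | zero => exact ⟨0, by simp⟩
  | add p q _ _ hp hq =>
    obtain ⟨⟨y, hy⟩, z, hz⟩ := hp, hq
    exact ⟨y + z, by rw [mul_add, hy, hz, Int.cast_add]⟩
  | neg q _ hq =>
    obtain ⟨z, hz⟩ := hq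
    exact ⟨-z, by rw [mul_neg, hz, Int.cast_neg]⟩

theorem sum_compl_row {ι R : Type*} [Fintype ι] [DecidableEq ι] [AddCommGroup R]
    (M : Matrix ι ι R) (i : ι) : ∑ j ∈ {i}ᶜ, M i j = ∑ j, M i j - M i i := by
  rw [Fintype.sum_eq_add_sum_compl i, add_sub_cancel_left]

section OfMatrix

variable {ι : Type*} [Fintype ι] [LinearOrder ι] [LocallyFiniteOrderTop ι] {M : Matrix ι ι ℤ}

/-- The edges of the multigraph with adjacency matrix `M`, all of length one. The diagonal of `M`
is ignored. -/
def unitEdges (M : Matrix ι ι ℤ) : Multiset (Sym2 ι × ℕ+) :=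
  ∑ i, ∑ j ∈ Finset.Ioi i, Multiset.replicate (M i j).toNat (s(i, j), 1)

theorem card_le_card_unitEdges_add_one (hM : M.IsSymm)
    (hconn : (SimpleGraph.fromRel fun i j => 0 < M i j).Connected) :
    Fintype.card ι ≤ (unitEdges M).card + 1 := by
  classical
  have hmem {i j : ι} (hij : i < j) (hpos : 0 < M i j) : (s(i, j), 1) ∈ unitEdges M := by
    simp only [unitEdges, Multiset.mem_sum]
    exact ⟨i, Finset.mem_univ i, j, Finset.mem_Ioi.2 hij,
      Multiset.mem_replicate.2 ⟨by omega, rfl⟩⟩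
  have hedges : (SimpleGraph.fromRel fun i j => 0 < M i j).edgeFinset ⊆
      ((unitEdges M).map Prod.fst).toFinset := fun z hz => by
    rw [Multiset.mem_toFinset, Multiset.mem_map]
    induction z with | h i j =>
    obtain ⟨hne, hpos⟩ : i ≠ j ∧ 0 < M i j := by
      simpa [hM.apply i j] using hz
    rcases hne.lt_or_gt with hij | hij
    · exact ⟨_, hmem hij hpos, rfl⟩
    · exact ⟨_, hmem hij ((hM.apply i j).symm ▸ hpos), Sym2.eq_swap⟩
  have hcard := hconn.card_vert_le_card_edgeSet_add_one
  rw [Nat.card_eq_fintype_card, Nat.card_eq_fintype_card, ← SimpleGraph.edgeFinset_card] at hcard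
  refine hcard.trans (Nat.succ_le_succ ((Finset.card_le_card hedges).trans ?_))
  exact (Multiset.toFinset_card_le _).trans_eq (Multiset.card_map _ _)

variable [LocallyFiniteOrderBot ι]

theorem sum_map_unitEdges {R : Type*} [CommRing R] (hM : M.IsSymm)
    (hoff : ∀ i j, i ≠ j → 0 ≤ M i j) {g : Sym2 ι × ℕ+ → R} {h : ι → ι → R}
    (hg : ∀ i j, g (s(i, j), 1) = h i j + h j i) :
    ((unitEdges M).map g).sum = ∑ i, ∑ j ∈ {i}ᶜ, (M i j : R) * h i j := by
  have hrep (i j : ι) (hij : j ∈ Finset.Ioi i) :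
      ((Multiset.replicate (M i j).toNat (s(i, j), (1 : ℕ+))).map g).sum =
        M i j * h i j + M j i * h j i := by
    have hcast : ((M i j).toNat : R) = M i j := by
      exact_mod_cast congrArg (Int.cast : ℤ → R)
        (Int.toNat_of_nonneg (hoff i j (Finset.mem_Ioi.1 hij).ne))
    rw [Multiset.map_replicate, Multiset.sum_replicate, nsmul_eq_mul, hg, hcast, hM.apply i j,
      mul_add]
  rw [← Finset.sum_sum_Ioi_add_eq_sum_sum_off_diag fun j i => (M i j : R) * h i j]
  change Multiset.sumAddMonoidHom (Multiset.mapAddMonoidHom g (unitEdges M)) = _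
  simp only [unitEdges, map_sum]
  exact Finset.sum_congr rfl fun i _ => Finset.sum_congr rfl fun j hj => hrep i j hj

theorem two_mul_card_unitEdges (hM : M.IsSymm)
    (hoff : ∀ i j, i ≠ j → 0 ≤ M i j) :
    2 * ((unitEdges M).card : ℤ) = ∑ i, (∑ j, M i j - M i i) := by
  have h := sum_map_unitEdges (g := fun _ => (2 : ℤ)) (h := fun _ _ => 1) hM hoff fun _ _ => rfl
  simp only [Multiset.map_const', Multiset.sum_replicate, nsmul_eq_mul, Int.cast_id, mul_one,
    sum_compl_row] at h
  rw [mul_comm, h]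

theorem valency_unitEdges (hM : M.IsSymm)
    (hoff : ∀ i j, i ≠ j → 0 ≤ M i j) (k : ι) :
    (Network.valency (unitEdges M) k : ℤ) = ∑ j, M k j - M k k := by
  have hg (i j : ι) : ((s(i, j).toMultiset.count k : ℕ) : ℤ) =
      (if k = i then 1 else 0) + if k = j then 1 else 0 := by
    change ((({i, j} : Multiset ι).count k : ℕ) : ℤ) = _
    rw [Multiset.insert_eq_cons, Multiset.count_cons, Multiset.count_singleton, add_comm]
    push_cast
    rfl
  have h := sum_map_unitEdges (g := fun e => (e.1.toMultiset.count k : ℤ)) hM hoff hg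
  rw [Network.valency, Multiset.count_bind, Nat.cast_multiset_sum, Multiset.map_map]
  refine h.trans ?_
  simp [sum_compl_row]

namespace Network

/-- The network whose energy form is the negative of the quadratic form of `M`. -/
def ofMatrix (M : Matrix ι ι ℤ) (c : ι → ℤ) : Network ι where
  verts := Finset.univ
  edges := unitEdges M
  weight i := ∑ j, M i j
  load := c
  mem_verts _ _ i _ := Finset.mem_univ i

variable {c : ι → ℤ} {n : ι → ℚ}

theorem energy_ofMatrix (hM : M.IsSymm)
    (hoff : ∀ i j, i ≠ j → 0 ≤ M i j) (x y : ι → ℚ) :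
    (ofMatrix M c).energy x y = -(x ⬝ᵥ M.map (Int.cast : ℤ → ℚ) *ᵥ y) := by
  have hedges : ((unitEdges M).map fun e => edgeForm e x y).sum =
      ∑ i, ∑ j, (M i j : ℚ) * (x i * (y i - y j)) := by
    rw [sum_map_unitEdges (h := fun i j => x i * (y i - y j)) hM hoff fun i j => by
      rw [edgeForm_mk, PNat.one_coe]; ring]
    refine Finset.sum_congr rfl fun i _ => ?_
    rw [Fintype.sum_eq_add_sum_compl i, sub_self, mul_zero, mul_zero, zero_add]
  rw [energy_apply, ofMatrix, hedges]
  simp only [dotProduct, mulVec, Matrix.map_apply, Int.cast_sum, Finset.sum_mul, Finset.mul_sum,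
    ← Finset.sum_sub_distrib, ← Finset.sum_neg_distrib]
  exact Finset.sum_congr rfl fun i _ => Finset.sum_congr rfl fun j _ => by ring

end Network

end OfMatrix

section QuadraticForm

variable {ι R : Type*} [Fintype ι]

theorem dotProduct_mulVec_two_sub [CommRing R] {M : Matrix ι ι R} (hM : M.IsSymm) (x : ι → R) :
    (2 - x) ⬝ᵥ M *ᵥ (2 - x) =
      4 * ∑ i, ∑ j, M i j - 4 * ∑ i, x i * ∑ j, M i j + x ⬝ᵥ M *ᵥ x := by
  have htwo : M *ᵥ 2 = (2 : R) • fun i => ∑ j, M i j := by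
    ext i
    simp [mulVec, dotProduct, ← Finset.sum_mul, mul_comm]
  have hswap : 2 ⬝ᵥ M *ᵥ x = x ⬝ᵥ M *ᵥ 2 := by
    rw [dotProduct_mulVec, ← mulVec_transpose, hM.eq, dotProduct_comm]
  rw [mulVec_sub, dotProduct_sub, sub_dotProduct, sub_dotProduct, hswap, htwo,
    dotProduct_smul, dotProduct_smul]
  simp only [dotProduct, Pi.ofNat_apply, ← Finset.mul_sum, smul_eq_mul]
  ring

theorem nonneg_of_mulVec_nonpos [CommRing R] [LinearOrder R] [IsStrictOrderedRing R]
    {M : Matrix ι ι R} (hneg : ∀ x ≠ 0, x ⬝ᵥ M *ᵥ x < 0) (hoff : ∀ i j, i ≠ j → 0 ≤ M i j)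
    {x : ι → R} (hx : M *ᵥ x ≤ 0) : 0 ≤ x := by
  rw [← negPart_eq_zero]
  by_contra hne
  have hle : x⁻ ⬝ᵥ M *ᵥ x ≤ 0 :=
    Finset.sum_nonpos fun i _ => mul_nonpos_of_nonneg_of_nonpos (negPart_nonneg x i) (hx i)
  have hcross : 0 ≤ x⁻ ⬝ᵥ M *ᵥ x⁺ := by
    simp only [dotProduct, mulVec, Finset.mul_sum]
    refine Finset.sum_nonneg fun i _ => Finset.sum_nonneg fun j _ => ?_
    rcases eq_or_ne i j with rfl | hij
    · rcases le_total 0 (x i) with h | h <;> simp [h]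
    · exact mul_nonneg (negPart_nonneg x i) (mul_nonneg (hoff i j hij) (posPart_nonneg x j))
  have hdiff : x⁻ ⬝ᵥ M *ᵥ x = x⁻ ⬝ᵥ M *ᵥ x⁺ - x⁻ ⬝ᵥ M *ᵥ x⁻ := by
    rw [← dotProduct_sub, ← mulVec_sub, posPart_sub_negPart]
  linarith [hneg _ hne]

end QuadraticForm

namespace ResolutionDatum

variable {r : ℕ} (D : ResolutionDatum r)

/-- The integers `K · A_i`. -/
def cInt (i : Fin r) : ℤ := 2 * (D.p i : ℤ) - 2 - D.M i i

/-- The row sums of the intersection matrix. -/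
def rowSum (i : Fin r) : ℤ := ∑ j, D.M i j

/-- The coefficients of `-K`. -/
noncomputable def anticanonical : Fin r → ℚ := -((D.M.map (Int.cast : ℤ → ℚ))⁻¹ *ᵥ D.c)

/-- The dual graph, as a network of unit resistors into which the current `K · A_i` is injected. -/
def network : Network (Fin r) := .ofMatrix D.M D.cInt

theorem cast_cInt (i : Fin r) : (D.cInt i : ℚ) = D.c i := by simp [cInt, c]

theorem dotProduct_mulVec_neg {x : Fin r → ℚ} (hx : x ≠ 0) :
    x ⬝ᵥ D.M.map (Int.cast : ℤ → ℚ) *ᵥ x < 0 := by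
  have h := D.negdef (fun i => x i) fun h => hx (funext fun i => by simpa using congrFun h i)
  simp only [dotProduct, mulVec, Matrix.map_apply] at h ⊢
  exact_mod_cast h

theorem dotProduct_mulVec_neg_int {x : Fin r → ℤ} (hx : x ≠ 0) : x ⬝ᵥ D.M *ᵥ x < 0 := by
  have h := D.negdef (fun i => x i) fun h => hx (funext fun i => by simpa using congrFun h i)
  simp only [dotProduct, mulVec, Matrix.map_apply] at h
  exact_mod_cast h

theorem diag_neg (i : Fin r) : D.M i i < 0 := by
  simpa using D.dotProduct_mulVec_neg_int (x := Pi.single i 1) (by simp)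

theorem cInt_nonneg (i : Fin r) : 0 ≤ D.cInt i := by
  have hneg := D.diag_neg i
  have hrational := D.diag_le_neg_two i
  unfold cInt
  omega

theorem neg_diag_le (i : Fin r) : -D.M i i ≤ D.cInt i + 2 := by
  unfold cInt
  omega

theorem diag_eq_of_cInt_eq_zero {i : Fin r} (h : D.cInt i = 0) : D.M i i = -2 := by
  have hneg := D.diag_neg i
  unfold cInt at h
  omega

theorem diag_le_sum {s : Finset (Fin r)} {i : Fin r} (hi : i ∈ s) :
    D.M i i ≤ ∑ j ∈ s, D.M i j := by
  rw [← Finset.add_sum_erase s _ hi]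
  exact le_add_of_nonneg_right (Finset.sum_nonneg fun j hj =>
    D.offdiag_nonneg i j (Finset.ne_of_mem_erase hj).symm)

theorem mulVec_anticanonical : D.M.map (Int.cast : ℤ → ℚ) *ᵥ D.anticanonical = -D.c := by
  have hdet : IsUnit (D.M.map (Int.cast : ℤ → ℚ)).det := by
    rw [isUnit_iff_ne_zero]
    intro hdet
    obtain ⟨x, hx, hMx⟩ := Matrix.exists_mulVec_eq_zero_iff.2 hdet
    simpa [hMx] using D.dotProduct_mulVec_neg hx
  rw [anticanonical, mulVec_neg, mulVec_mulVec, Matrix.mul_nonsing_inv _ hdet, one_mulVec]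

theorem dotProduct_anticanonical : D.c ⬝ᵥ D.anticanonical = D.negK2 := by
  rw [anticanonical, dotProduct_neg, negK2]

theorem anticanonical_nonneg : 0 ≤ D.anticanonical := by
  refine nonneg_of_mulVec_nonpos (fun x hx => D.dotProduct_mulVec_neg hx)
    (fun i j hij => Int.cast_nonneg (D.offdiag_nonneg i j hij)) ?_
  rw [D.mulVec_anticanonical]
  intro i
  rw [Pi.neg_apply, ← D.cast_cInt]
  exact neg_nonpos.2 (Int.cast_nonneg (D.cInt_nonneg i))

theorem energy_network (x y : Fin r → ℚ) :
    D.network.energy x y = -(x ⬝ᵥ D.M.map (Int.cast : ℤ → ℚ) *ᵥ y) :=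
  Network.energy_ofMatrix D.symm D.offdiag_nonneg x y

theorem isPotential_anticanonical : D.network.IsPotential D.anticanonical := fun x => by
  rw [← D.network.energy_isSymm.eq, energy_network, D.mulVec_anticanonical, dotProduct_neg,
    neg_neg, dotProduct_comm]
  simp only [dotProduct, ← D.cast_cInt]
  rfl

theorem isEquilibrium_anticanonical :
    D.network.IsEquilibrium D.anticanonical D.negK2 where
  posDef x hx := by
    obtain ⟨i, -, hi⟩ := hx
    rw [energy_network, neg_pos]
    exact D.dotProduct_mulVec_neg fun h => hi (congrFun h i)
  isPotential := D.isPotential_anticanonical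
  energy_self := by
    rw [energy_network, D.mulVec_anticanonical, dotProduct_neg, neg_neg, dotProduct_comm,
      dotProduct_anticanonical]

theorem valency_network {i : Fin r} (hw : D.network.weight i = 0) (hl : D.network.load i = 0) :
    Network.valency D.network.edges i = 2 := by
  have hval := valency_unitEdges D.symm D.offdiag_nonneg i
  have hsum : ∑ j, D.M i j = 0 := hw
  rw [hsum, D.diag_eq_of_cInt_eq_zero hl] at hval
  exact Int.natCast_inj.1 hval

theorem cInt_le_mul_anticanonical (i : Fin r) :
    (D.cInt i : ℚ) ≤ -D.M i i * D.anticanonical i := by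
  have hrow := congrFun D.mulVec_anticanonical i
  simp only [mulVec, dotProduct, Matrix.map_apply, Pi.neg_apply, ← D.cast_cInt] at hrow
  rw [Fintype.sum_eq_add_sum_compl i] at hrow
  have hoff : 0 ≤ ∑ j ∈ {i}ᶜ, (D.M i j : ℚ) * D.anticanonical j := Finset.sum_nonneg fun j hj =>
    mul_nonneg (Int.cast_nonneg (D.offdiag_nonneg i j fun h => by simp [h] at hj))
      (D.anticanonical_nonneg j)
  linarith

theorem sum_cInt_le : (∑ i, D.cInt i : ℚ) ≤ 3 * D.negK2 := by
  rw [← dotProduct_anticanonical, dotProduct, Finset.mul_sum]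
  refine Finset.sum_le_sum fun i _ => ?_
  rw [← D.cast_cInt]
  rcases (D.cInt_nonneg i).eq_or_lt with hzero | hpos
  · simp [← hzero]
  have hdiag : (-D.M i i : ℚ) ≤ 3 * D.cInt i := by
    have := D.neg_diag_le i
    exact_mod_cast (by omega : -D.M i i ≤ 3 * D.cInt i)
  calc (D.cInt i : ℚ) ≤ -D.M i i * D.anticanonical i := D.cInt_le_mul_anticanonical i
    _ ≤ 3 * D.cInt i * D.anticanonical i :=
      mul_le_mul_of_nonneg_right hdiag (D.anticanonical_nonneg i)
    _ = 3 * (D.cInt i * D.anticanonical i) := mul_assoc _ _ _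

theorem sum_rowSum_neg : ∑ i, D.rowSum i < 0 := by
  have := D.connected.nonempty
  simpa [dotProduct, mulVec, rowSum] using D.dotProduct_mulVec_neg_int one_ne_zero

theorem sum_neg_diag_le : -∑ i, D.M i i ≤ ∑ i, D.cInt i + 2 * r := by
  rw [← Finset.sum_neg_distrib]
  refine (Finset.sum_le_sum fun i _ => D.neg_diag_le i).trans_eq ?_
  simp [Finset.sum_add_distrib, mul_comm]

theorem two_mul_card_edges_network :
    2 * (D.network.edges.card : ℤ) = ∑ i, D.rowSum i - ∑ i, D.M i i :=
  (two_mul_card_unitEdges D.symm D.offdiag_nonneg).trans (Finset.sum_sub_distrib ..)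

theorem card_edges_network_le : (D.network.edges.card : ℤ) ≤ r + ∑ i, D.cInt i := by
  have hedges := D.two_mul_card_edges_network
  have hrow := D.sum_rowSum_neg
  have hdiag := D.sum_neg_diag_le
  have hc := Finset.sum_nonneg fun i (_ : i ∈ Finset.univ) => D.cInt_nonneg i
  omega

theorem le_sum_rowSum : -2 - ∑ i, D.cInt i ≤ ∑ i, D.rowSum i := by
  have hconn : Fintype.card (Fin r) ≤ D.network.edges.card + 1 :=
    card_le_card_unitEdges_add_one D.symm D.connected
  rw [Fintype.card_fin] at hconn
  have hedges := D.two_mul_card_edges_network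
  have hdiag := D.sum_neg_diag_le
  omega

/-- The `(-2)`-curves which are ends of the dual graph, or isolated: the vertices that contribute
to the size of the network only through a negative row sum. -/
def minusTwoEnds : Finset (Fin r) := {i | D.cInt i = 0 ∧ D.rowSum i < 0}

theorem mem_minusTwoEnds {i : Fin r} : i ∈ D.minusTwoEnds ↔ D.cInt i = 0 ∧ D.rowSum i < 0 := by
  simp [minusTwoEnds]

theorem two_mul_rowSum_le_of_mem_minusTwoEnds {i : Fin r} (hi : i ∈ D.minusTwoEnds) :
    2 * D.rowSum i ≤ ∑ j ∈ D.minusTwoEnds, D.M i j := by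
  obtain ⟨hc, hrow⟩ := D.mem_minusTwoEnds.1 hi
  have hdiag := D.diag_eq_of_cInt_eq_zero hc
  have hsum := D.diag_le_sum hi
  omega

/-- Negative definiteness is tested on the vector that is `1` on the `(-2)`-ends and `2`
elsewhere. -/
theorem two_mul_sum_rowSum_le_sum_minusTwoEnds :
    2 * ∑ i, D.rowSum i ≤ ∑ i ∈ D.minusTwoEnds, D.rowSum i := by
  obtain ⟨k⟩ := D.connected.nonempty
  set x : Fin r → ℤ := fun i => if i ∈ D.minusTwoEnds then 1 else 0 with hx
  have hneg := D.dotProduct_mulVec_neg_int (x := 2 - x) fun h => by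
    have := congrFun h k
    simp only [hx, Pi.sub_apply, Pi.ofNat_apply] at this
    split_ifs at this <;> omega
  rw [dotProduct_mulVec_two_sub D.symm] at hneg
  have hmul (f : Fin r → ℤ) : ∑ i, x i * f i = ∑ i ∈ D.minusTwoEnds, f i := by
    simp [hx]
  have hquad : x ⬝ᵥ D.M *ᵥ x = ∑ i ∈ D.minusTwoEnds, ∑ j ∈ D.minusTwoEnds, D.M i j := by
    rw [dotProduct, hmul]
    simp [hx, mulVec, dotProduct]
  have hle := Finset.sum_le_sum fun i hi => D.two_mul_rowSum_le_of_mem_minusTwoEnds hi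
  rw [hmul, hquad] at hneg
  rw [← Finset.mul_sum] at hle
  simp only [rowSum] at hle ⊢
  linarith

theorem abs_rowSum_le (i : Fin r) : |D.rowSum i| ≤
    D.rowSum i + 6 * D.cInt i - 2 * if i ∈ D.minusTwoEnds then D.rowSum i else 0 := by
  have hc := D.cInt_nonneg i
  have hdiag := D.neg_diag_le i
  have hrow : D.M i i ≤ D.rowSum i := D.diag_le_sum (Finset.mem_univ i)
  have hmem := D.mem_minusTwoEnds (i := i)
  split_ifs with h
  · rw [abs_of_neg (hmem.1 h).2]
    omega
  · rw [hmem] at h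
    rw [abs_le]
    constructor <;> omega

theorem size_network_le : D.network.size ≤ 6 + 10 * ∑ i, D.cInt i := by
  have hsize : D.network.size = ∑ i, |D.rowSum i| + ∑ i, D.cInt i := by
    rw [← Finset.sum_add_distrib]
    exact Finset.sum_congr rfl fun i _ => congrArg _ (abs_of_nonneg (D.cInt_nonneg i))
  have habs := Finset.sum_le_sum fun i (_ : i ∈ Finset.univ) => D.abs_rowSum_le i
  rw [Finset.sum_sub_distrib, Finset.sum_add_distrib, ← Finset.mul_sum, ← Finset.mul_sum,
    Finset.sum_ite_mem, Finset.univ_inter] at habs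
  have hends := D.two_mul_sum_rowSum_le_sum_minusTwoEnds
  have hlow := D.le_sum_rowSum
  omega

theorem exists_common_denominator_anticanonical (v : ℚ) : ∃ N : ℕ, 0 < N ∧
    ∀ (r : ℕ) (D : ResolutionDatum r), D.negK2 = v →
      ∀ i, ∃ z : ℤ, N * D.anticanonical i = z := by
  obtain ⟨S, hS, hcoeffs⟩ := Network.exists_finite_coeffs_subset_closure (6 + 10 * ⌈3 * v⌉₊) v
  obtain ⟨N, hN, hclear⟩ := exists_common_denominator hS
  refine ⟨N, hN, fun r D hv i => hclear _ (hcoeffs D.network D.anticanonical ?_ ?_ ?_ ?_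
    (Or.inl ⟨i, Finset.mem_univ i, rfl⟩))⟩
  · exact hv ▸ D.isEquilibrium_anticanonical
  · exact fun j _ => D.valency_network
  all_goals
    have hc : ∑ i, D.cInt i ≤ ⌈3 * v⌉₊ := by
      exact_mod_cast (hv ▸ D.sum_cInt_le).trans (Nat.le_ceil (3 * v))
  · have := D.size_network_le
    push_cast
    omega
  · have := D.card_edges_network_le
    have hverts : D.network.verts.card = r := Finset.card_fin r
    omega

end ResolutionDatum

/-- **Theorem 3.6.** For fixed value `v` of `-K²`, the numerical indices are bounded: the
least positive integer `ρ` such that `ρ · M⁻¹ c` has integer entries is bounded by a constant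
depending only on `v`. -/
theorem numerical_index_bounded (v : ℚ) :
    ∃ N : ℕ, ∀ (r : ℕ), 0 < r → ∀ D : ResolutionDatum r, D.negK2 = v →
      ∀ ρ : ℕ,
        IsLeast {ρ' : ℕ | 0 < ρ' ∧
            ∀ i : Fin r, ∃ z : ℤ,
              (ρ' : ℚ) * (((D.M.map (Int.cast : ℤ → ℚ))⁻¹ *ᵥ D.c) i) = (z : ℚ)} ρ →
        ρ ≤ N := by
  obtain ⟨N, hN, hclear⟩ := ResolutionDatum.exists_common_denominator_anticanonical v
  refine ⟨N, fun r _ D hD ρ hρ => hρ.2 ⟨hN, fun i => ?_⟩⟩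
  obtain ⟨z, hz⟩ := hclear r D hD i
  exact ⟨-z, by rw [Int.cast_neg, ← hz, ResolutionDatum.anticanonical, Pi.neg_apply, mul_neg,
    neg_neg]⟩
end

section
/- Let n ∈ ℕ and let M be the (n+2)×(n+2) symmetric integer tridiagonal matrix indexed by 0, 1, ..., n+1 with M 0 0 = M (n+1) (n+1) = -3, M i i = -2 for 1 ≤ i ≤ n, M i (i+1) = M (i+1) i = 1 for 0 ≤ i ≤ n, and all other entries 0. Let c ∈ ℚ^{n+2} be the vector with c 0 = c (n+1) = 1 and all other entries 0 (this is c i = -2 - M i i for genera p ≡ 0). Then M is negative definite and -cᵀ M⁻¹ c = 1 for every n. -/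
open Matrix

/-!
The dual graph of the chain is a path, in which the vertex `i` has degree `2 - c i`. Since
`-M i i = 2 + c i = (2 - c i) + 2 * c i`, the intersection matrix is `M = -(L + diagonal (2 * c))`
with `L` the Laplacian of the path. On a connected graph, `L` is positive semidefinite with only
the constant vectors as null vectors, so adding a nonzero nonnegative diagonal makes it positive
definite. As `L` kills the all-ones vector `1`, we get `M 1 = -2 c`, whence
`M⁻¹ c = -1 / 2` and `-cᵀ M⁻¹ c = (∑ i, c i) / 2 = 1`.
-/

section Laplacian

variable {V R : Type*} {G : SimpleGraph V}

theorem apply_eq_of_reachable_of_forall_adj {α : Type*} {x : V → α}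
    (hx : ∀ i j, G.Adj i j → x i = x j) {i j : V} (hij : G.Reachable i j) : x i = x j := by
  obtain ⟨w⟩ := hij
  induction w with
  | nil => rfl
  | cons hadj _ ih => exact (hx _ _ hadj).trans ih

variable [Fintype V] [DecidableEq V] [DecidableRel G.Adj]

theorem lapMatrix_add_diagonal_mulVec_one [NonAssocRing R] (d : V → R) :
    (G.lapMatrix R + diagonal d) *ᵥ 1 = d := by
  ext i
  simp [add_mulVec, SimpleGraph.lapMatrix_mulVec_apply, mulVec_diagonal]

variable [Field R] [LinearOrder R] [IsStrictOrderedRing R]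

theorem eq_zero_of_dotProduct_lapMatrix_mulVec_eq_zero (hG : G.Preconnected) {x : V → R}
    (hx : x ⬝ᵥ (G.lapMatrix R *ᵥ x) = 0) {i : V} (hi : x i = 0) : x = 0 := by
  have hadj : ∀ i j, G.Adj i j → x i = x j :=
    (G.lapMatrix_toLinearMap₂'_apply'_eq_zero_iff_forall_adj R x).1 (by rwa [toLinearMap₂'_apply'])
  exact funext fun j => (apply_eq_of_reachable_of_forall_adj hadj (hG j i)).trans hi

theorem posDef_lapMatrix_add_diagonal [StarRing R] [TrivialStar R] (hG : G.Preconnected)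
    {d : V → R} (hd : 0 < d) :
    (G.lapMatrix R + diagonal d).PosDef := by
  refine .of_dotProduct_mulVec_pos
    ((G.isHermitian_lapMatrix R).add (isHermitian_diagonal d)) fun x hx => ?_
  obtain ⟨hd_nonneg, v, hv⟩ := Pi.lt_def.1 hd
  have hlap : 0 ≤ x ⬝ᵥ (G.lapMatrix R *ᵥ x) := by
    simpa using (G.posSemidef_lapMatrix R).dotProduct_mulVec_nonneg x
  have hterm (i : V) : 0 ≤ x i * (d i * x i) := by
    rw [mul_left_comm]
    exact mul_nonneg (hd_nonneg i) (mul_self_nonneg _)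
  have hdiag : x ⬝ᵥ (diagonal d *ᵥ x) = ∑ i, x i * (d i * x i) := by
    simp only [dotProduct, mulVec_diagonal]
  rw [star_trivial, add_mulVec, dotProduct_add, hdiag]
  by_cases hxv : x v = 0
  · have hlap_ne : x ⬝ᵥ (G.lapMatrix R *ᵥ x) ≠ 0 := fun h =>
      hx (eq_zero_of_dotProduct_lapMatrix_mulVec_eq_zero hG h hxv)
    exact add_pos_of_pos_of_nonneg (hlap.lt_of_ne' hlap_ne)
      (Finset.sum_nonneg fun i _ => hterm i)
  · refine add_pos_of_nonneg_of_pos hlap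
      (Finset.sum_pos' (fun i _ => hterm i) ⟨v, Finset.mem_univ v, ?_⟩)
    rw [mul_left_comm]
    exact mul_pos hv (mul_self_pos.2 hxv)

end Laplacian

section Chain

/-- The intersection matrix of the chain `A₀, …, A_{n+1}` of rational curves whose two ends have
self-intersection `-3` and whose inner members have self-intersection `-2`. -/
def chainIntersectionMatrix (n : ℕ) : Matrix (Fin (n + 2)) (Fin (n + 2)) ℤ := fun i j =>
  if i = j then (if (i : ℕ) = 0 ∨ (i : ℕ) = n + 1 then -3 else -2)
  else if (i : ℕ) + 1 = (j : ℕ) ∨ (j : ℕ) + 1 = (i : ℕ) then 1 else 0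

/-- The vector of the degrees `K · A_i = -2 - A_i²` of the canonical class on the curves of the
chain, given by its values so that they make sense in any ring `R`. -/
def chainCanonicalDegree (n : ℕ) (R : Type*) [Zero R] [One R] : Fin (n + 2) → R := fun i =>
  if (i : ℕ) = 0 ∨ (i : ℕ) = n + 1 then 1 else 0

variable (n : ℕ) (R : Type*)

theorem chainCanonicalDegree_eq_single_add_single [AddMonoidWithOne R] :
    chainCanonicalDegree n R = Pi.single 0 1 + Pi.single (Fin.last (n + 1)) 1 := by
  ext i
  simp only [chainCanonicalDegree, Pi.add_apply, Pi.single_apply, Fin.ext_iff, Fin.val_zero,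
    Fin.val_last]
  split_ifs <;> first | omega | simp

theorem sum_chainCanonicalDegree [AddCommMonoidWithOne R] :
    ∑ i, chainCanonicalDegree n R i = 2 := by
  simp [chainCanonicalDegree_eq_single_add_single, Finset.sum_add_distrib, one_add_one_eq_two]

theorem chainCanonicalDegree_pos [Zero R] [One R] [PartialOrder R] [ZeroLEOneClass R]
    [NeZero (1 : R)] :
    0 < chainCanonicalDegree n R := by
  refine Pi.lt_def.2 ⟨fun i => ?_, 0, by simp [chainCanonicalDegree]⟩
  simp only [chainCanonicalDegree, Pi.zero_apply]
  split_ifs <;> simp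

theorem degree_pathGraph [DecidableRel (SimpleGraph.pathGraph (n + 2)).Adj] (i : Fin (n + 2)) :
    (SimpleGraph.pathGraph (n + 2)).degree i =
      if (i : ℕ) = 0 ∨ (i : ℕ) = n + 1 then 1 else 2 := by
  have hmem (j : Fin (n + 2)) : j ∈ (SimpleGraph.pathGraph (n + 2)).neighborFinset i ↔
      (i : ℕ) + 1 = j ∨ (j : ℕ) + 1 = i := by
    rw [SimpleGraph.mem_neighborFinset, SimpleGraph.pathGraph_adj]
  rw [← SimpleGraph.card_neighborFinset_eq_degree]
  split_ifs with hi
  · rcases hi with hi | hi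
    · refine Finset.card_eq_one.2 ⟨⟨1, by omega⟩, Finset.ext fun j => ?_⟩
      simp only [hmem, Finset.mem_singleton, Fin.ext_iff]
      omega
    · refine Finset.card_eq_one.2 ⟨⟨n, by omega⟩, Finset.ext fun j => ?_⟩
      simp only [hmem, Finset.mem_singleton, Fin.ext_iff]
      omega
  · refine Finset.card_eq_two.2
      ⟨⟨i - 1, by omega⟩, ⟨i + 1, by omega⟩, by simp, Finset.ext fun j => ?_⟩
    simp only [hmem, Finset.mem_insert, Finset.mem_singleton, Fin.ext_iff]
    omega

theorem chainIntersectionMatrix_map_eq_neg_lapMatrix_add_diagonal [Ring R]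
    [DecidableRel (SimpleGraph.pathGraph (n + 2)).Adj] :
    (chainIntersectionMatrix n).map (Int.cast : ℤ → R) =
      -((SimpleGraph.pathGraph (n + 2)).lapMatrix R +
        diagonal ((2 : R) • chainCanonicalDegree n R)) := by
  ext i j
  rcases eq_or_ne i j with rfl | hij
  · simp only [chainIntersectionMatrix, chainCanonicalDegree, SimpleGraph.lapMatrix,
      SimpleGraph.degMatrix, degree_pathGraph, map_apply, Matrix.neg_apply, Matrix.add_apply,
      Matrix.sub_apply, diagonal_apply_eq, SimpleGraph.adjMatrix_apply, SimpleGraph.irrefl,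
      Pi.smul_apply, if_true, if_false]
    split_ifs <;> norm_num
  · simp [chainIntersectionMatrix, SimpleGraph.lapMatrix, SimpleGraph.degMatrix, hij,
      SimpleGraph.pathGraph_adj]

end Chain

theorem negK2_two_three_curves_chain_general (n : ℕ) (K : Type*) [Field K] [LinearOrder K]
    [IsStrictOrderedRing K] :
    (∀ x : Fin (n + 2) → K, x ≠ 0 →
      x ⬝ᵥ ((chainIntersectionMatrix n).map (Int.cast : ℤ → K) *ᵥ x) < 0) ∧
    -(chainCanonicalDegree n K ⬝ᵥ
      (((chainIntersectionMatrix n).map (Int.cast : ℤ → K))⁻¹ *ᵥ chainCanonicalDegree n K)) =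
        1 := by
  classical
  let _ : StarRing K := starRingOfComm
  have : TrivialStar K := ⟨fun _ => rfl⟩
  set c := chainCanonicalDegree n K
  set A := (SimpleGraph.pathGraph (n + 2)).lapMatrix K + diagonal ((2 : K) • c)
  have hM : (chainIntersectionMatrix n).map (Int.cast : ℤ → K) = -A :=
    chainIntersectionMatrix_map_eq_neg_lapMatrix_add_diagonal n K
  have hA : A.PosDef := posDef_lapMatrix_add_diagonal (SimpleGraph.pathGraph_preconnected _)
    (smul_pos two_pos (chainCanonicalDegree_pos n K))
  rw [hM]
  refine ⟨fun x hx => ?_, ?_⟩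
  · simpa [neg_mulVec] using hA.dotProduct_mulVec_pos hx
  · have hc : c = -A *ᵥ -((2⁻¹ : K) • 1) := by
      rw [neg_mulVec_neg, mulVec_smul, lapMatrix_add_diagonal_mulVec_one,
        inv_smul_smul₀ two_ne_zero]
    have hinv : (-A)⁻¹ *ᵥ c = -((2⁻¹ : K) • 1) :=
      let _ := hA.isUnit.neg.invertible
      inv_mulVec_eq_vec hc
    rw [hinv, dotProduct_neg, neg_neg, dotProduct_smul, dotProduct_one, sum_chainCanonicalDegree,
      smul_eq_mul, inv_mul_cancel₀ two_ne_zero]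

/-- **Example 3.1.** For the chain of `n` rational `(-2)`-curves with a rational `(-3)`-curve
attached at each end, the intersection matrix is negative definite and `-K² = -cᵀ M⁻¹ c = 1`
for every `n`. -/
theorem negK2_two_three_curves_chain (n : ℕ)
    (M : Matrix (Fin (n + 2)) (Fin (n + 2)) ℤ)
    (hM : M = fun i j : Fin (n + 2) =>
      if i = j then (if (i : ℕ) = 0 ∨ (i : ℕ) = n + 1 then -3 else -2)
      else if (i : ℕ) + 1 = (j : ℕ) ∨ (j : ℕ) + 1 = (i : ℕ) then 1 else 0)
    (c : Fin (n + 2) → ℚ)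
    (hc : c = fun i : Fin (n + 2) => if (i : ℕ) = 0 ∨ (i : ℕ) = n + 1 then 1 else 0) :
    (∀ x : Fin (n + 2) → ℝ, x ≠ 0 → x ⬝ᵥ ((M.map (Int.cast : ℤ → ℝ)) *ᵥ x) < 0) ∧
    - (c ⬝ᵥ ((M.map (Int.cast : ℤ → ℚ))⁻¹ *ᵥ c)) = 1 := by
  subst hM hc
  exact ⟨(negK2_two_three_curves_chain_general n ℝ).1, (negK2_two_three_curves_chain_general n ℚ).2⟩
end
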